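/- Let T be a string of length n and 1 ≤ i < j ≤ n. Let p be the starting position of the minimal suffix in Suf[i, j], and for each ℓ = 1, …, α(i, j) let p_ℓ be the starting position of the minimal suffix in Suf[j − Len(ℓ, j) + 1, j]. Let 1 ≤ k' < k ≤ α(i, j). (a) If the minimal suffix of S_j^k has length greater than Len(k', j), then the minimal suffix of T[i..j] equals T[q..j] for some q ∈ {p, p_{k'+1}, …, p_{α(i,j)}}. (b) If the minimal suffix of S_j^k has length at most Len(k', j), then the minimal suffix of T[i..j] equals T[q..j] for some q ∈ {p, p_1, …, p_{k'}, p_{k+1}, …, p_{α(i,j)}}. -/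

import Mathlib

/-!
Write `L = j - i + 1`. The minimal suffix `s` of a string is unbordered: a proper nonempty border
would be a smaller suffix. If `P` starts the minimal suffix in `Suf[a, j]` and `s` is the minimal
suffix of `T[a..j]`, comparing `T[P..]` with `T[j - |s| + 1..]` shows that `s` is a prefix of
`T[P..j]`; it is also a suffix of it, and the two occurrences cannot overlap unless they coincide.
Hence `s = T[P..j]` or `2|s| ≤ j - a + 1` (`eq_or_two_mul_length_le`).

With `a = i`, either `s = T[p..j]` or `2|s| ≤ L`. In the second case let `ℓ` be the least
index with `|s| ≤ Len ℓ j`. Since `Len (ℓ+1) j ≤ 2 Len ℓ j + 1`, this gives `ℓ ≤ A` and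
`Len ℓ j < 2|s|`. As `s` is also the minimal suffix of `S_j^ℓ`, the dichotomy applied to `S_j^ℓ`
leaves only `s = T[ps ℓ..j]`. Finally, `s` coincides with the minimal suffix `sk` of `S_j^k` as
soon as `|s| ≤ Len k j`, which together with the monotonicity of `Len` places `ℓ` in the
ranges claimed in the two parts.
-/

variable {α : Type*} [LinearOrder α]

/-- `substr T i j` is the 1-indexed substring `T[i..j]` (inclusive). -/
def substr (T : List α) (i j : ℕ) : List α := (T.drop (i - 1)).take (j - i + 1)

/-- `sufFrom T i` is the 1-indexed suffix `T[i..]`. -/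
def sufFrom (T : List α) (i : ℕ) : List α := T.drop (i - 1)

/-- `s` is the lexicographically minimal nonempty suffix of `w`. -/
def IsMinSuffix (w s : List α) : Prop :=
  s ≠ [] ∧ s <:+ w ∧ ∀ t, t ≠ [] → t <:+ w → ¬ List.Lex (· < ·) t s

/-- `Len ℓ j`: for `ℓ = 1` it is `1`; for `ℓ ≥ 2`, with `m = ⌊ℓ/2⌋ - 1`, it is
`2·2^m + (j mod 2^m)` if `ℓ` is even and `3·2^m + (j mod 2^m)` if `ℓ` is odd.
The canonical substring `S_j^ℓ` is the suffix of `T[1..j]` of length `Len ℓ j`,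
i.e. `substr T (j - Len ℓ j + 1) j`. -/
def Len (ℓ j : ℕ) : ℕ :=
  if ℓ = 1 then 1
  else if ℓ % 2 = 0 then 2 * 2 ^ (ℓ / 2 - 1) + j % 2 ^ (ℓ / 2 - 1)
  else 3 * 2 ^ (ℓ / 2 - 1) + j % 2 ^ (ℓ / 2 - 1)

theorem lex_trichotomy (u v : List α) (h₁ : ¬ List.Lex (· < ·) u v)
    (h₂ : ¬ List.Lex (· < ·) v u) : u = v := by
  have h₁' : ¬ u < v := h₁
  have h₂' : ¬ v < u := h₂
  exact le_antisymm (not_lt.1 h₂') (not_lt.1 h₁')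

theorem lex_of_prefix {u v : List α} (h : u <+: v) (hne : u.length < v.length) :
    List.Lex (· < ·) u v := by
  induction u generalizing v with
  | nil =>
    cases v with
    | nil => simp at hne
    | cons b v => exact List.Lex.nil
  | cons a u ih =>
    cases v with
    | nil => simp at hne
    | cons b v =>
      obtain ⟨rfl, huv⟩ := List.cons_prefix_cons.1 h
      exact List.Lex.cons (ih huv (by simpa using hne))

/-- If `s` is not larger than `u`, but appending a common string `z` does not make `s ++ z`
smaller than `u ++ z`, then no mismatch occurs within `s`. -/
theorem prefix_of_not_lex (s u z : List α) (h₁ : ¬ List.Lex (· < ·) u s)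
    (h₂ : ¬ List.Lex (· < ·) (s ++ z) (u ++ z)) : s <+: u := by
  induction s generalizing u with
  | nil => exact List.nil_prefix
  | cons a s ih =>
    cases u with
    | nil => exact absurd List.Lex.nil h₁
    | cons b u =>
      rcases lt_trichotomy a b with hab | rfl | hab
      · exact absurd (List.Lex.rel hab) h₂
      · exact List.cons_prefix_cons.2 ⟨rfl, ih u (fun h => h₁ (List.Lex.cons h))
          (fun h => h₂ (List.Lex.cons h))⟩
      · exact absurd (List.Lex.rel hab) h₁

theorem IsMinSuffix.unique {w s t : List α} (hs : IsMinSuffix w s) (ht : IsMinSuffix w t) :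
    s = t :=
  lex_trichotomy s t (ht.2.2 s hs.1 hs.2.1) (hs.2.2 t ht.1 ht.2.1)

theorem IsMinSuffix.of_suffix {w v s : List α} (hs : IsMinSuffix w s) (hv : v <:+ w)
    (hlen : s.length ≤ v.length) : IsMinSuffix v s :=
  ⟨hs.1, List.suffix_of_suffix_length_le hs.2.1 hv hlen,
    fun t ht htv => hs.2.2 t ht (htv.trans hv)⟩

/-- A minimal suffix `s` of `w` either equals the suffix `u` or fits twice into `w`, provided that
`u` beats `s` once both are continued by `z`. -/
theorem IsMinSuffix.eq_or_two_mul_length_le {w s u : List α} (z : List α)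
    (hs : IsMinSuffix w s) (hu : u <:+ w) (hu0 : u ≠ [])
    (h : ¬ List.Lex (· < ·) (s ++ z) (u ++ z)) : s = u ∨ 2 * s.length ≤ w.length := by
  have hpre : s <+: u := prefix_of_not_lex s u z (hs.2.2 u hu0 hu) h
  have hsuf : s <:+ u := List.suffix_of_suffix_length_le hs.2.1 hu hpre.length_le
  have huw := hu.length_le
  obtain ⟨y, rfl⟩ := hsuf
  by_contra! hcon
  obtain ⟨hne, hlt⟩ := hcon
  have hy : 0 < y.length := by
    rcases y with _ | ⟨a, y⟩
    · simp at hne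
    · simp
  simp only [List.length_append] at huw
  -- The overlap of the two occurrences of `s` in `y ++ s` is a border of `s`.
  have hb : s.drop y.length <+: s := by
    have := hpre.drop y.length
    simpa using this
  refine hs.2.2 (s.drop y.length) ?_ ((List.drop_suffix _ _).trans hs.2.1)
    (lex_of_prefix hb ?_)
  · intro h0
    have := congrArg List.length h0
    simp only [List.length_drop, List.length_nil] at this
    omega
  · simp only [List.length_drop]
    omega

theorem substr_eq (T : List α) {a j : ℕ} (ha : 1 ≤ a) (haj : a ≤ j) :
    substr T a j = (T.take j).drop (a - 1) := by
  rw [substr, List.drop_take]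
  congr 1
  omega

theorem length_substr (T : List α) {a j : ℕ} (ha : 1 ≤ a) (haj : a ≤ j) (hj : j ≤ T.length) :
    (substr T a j).length = j - a + 1 := by
  rw [substr_eq T ha haj]
  simp only [List.length_drop, List.length_take]
  omega

theorem substr_suffix (T : List α) {a b j : ℕ} (ha : 1 ≤ a) (hab : a ≤ b) (hbj : b ≤ j) :
    substr T b j <:+ substr T a j := by
  rw [substr_eq T ha (hab.trans hbj), substr_eq T (ha.trans hab) hbj]
  exact List.drop_suffix_drop_left _ (by omega)

theorem sufFrom_eq (T : List α) {a j : ℕ} (ha : 1 ≤ a) (haj : a ≤ j) :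
    sufFrom T a = substr T a j ++ T.drop j := by
  have h : T.drop j = (T.drop (a - 1)).drop (j - a + 1) := by
    rw [List.drop_drop]
    congr 1
    omega
  rw [sufFrom, substr, h, List.take_append_drop]

/-- The dichotomy for the minimal suffix `s` of `T[a..j]` and the starting position `P` of the
minimal suffix in `Suf[a, j]`. -/
theorem eq_or_two_mul_length_le (T : List α) {a j P : ℕ} {s : List α} (ha : 1 ≤ a)
    (hj : j ≤ T.length) (haP : a ≤ P) (hPj : P ≤ j)
    (hP : ∀ q, a ≤ q → q ≤ j → ¬ List.Lex (· < ·) (sufFrom T q) (sufFrom T P))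
    (hs : IsMinSuffix (substr T a j) s) :
    s = substr T P j ∨ 2 * s.length ≤ j - a + 1 := by
  have hlen := length_substr T ha (haP.trans hPj) hj
  have hle := hs.2.1.length_le
  have hpos : 0 < s.length := List.length_pos_iff.2 hs.1
  have hq1 : a ≤ j + 1 - s.length := by omega
  have hq2 : j + 1 - s.length ≤ j := by omega
  have hsq : s = substr T (j + 1 - s.length) j := by
    have hl := length_substr T (ha.trans hq1) hq2 hj
    have hl' : s.length = (substr T (j + 1 - s.length) j).length := by omega
    exact (List.suffix_of_suffix_length_le hs.2.1 (substr_suffix T ha hq1 hq2) hl'.le).eq_of_length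
      hl'
  have hcmp := hP _ hq1 hq2
  rw [sufFrom_eq T (ha.trans hq1) hq2, ← hsq, sufFrom_eq T (ha.trans haP) hPj] at hcmp
  rw [← hlen]
  refine hs.eq_or_two_mul_length_le _ (substr_suffix T ha haP hPj) ?_ hcmp
  intro h0
  have := length_substr T (ha.trans haP) hPj hj
  rw [h0] at this
  simp at this

theorem Len_step (l j : ℕ) (hl : 1 ≤ l) :
    Len l j ≤ Len (l + 1) j ∧ Len (l + 1) j ≤ 2 * Len l j + 1 := by
  rcases Nat.even_or_odd' l with ⟨c, rfl | rfl⟩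
  · obtain ⟨m, rfl⟩ : ∃ m, c = m + 1 := ⟨c - 1, by omega⟩
    have e1 : 2 * (m + 1) / 2 - 1 = m := by omega
    have e2 : (2 * (m + 1) + 1) / 2 - 1 = m := by omega
    have h1 : 2 * (m + 1) ≠ 1 := by omega
    have h2 : 2 * (m + 1) + 1 ≠ 1 := by omega
    have h3 : 2 * (m + 1) % 2 = 0 := by omega
    have h4 : (2 * (m + 1) + 1) % 2 ≠ 0 := by omega
    simp only [Len, h1, h2, h3, h4, e1, e2, if_true, if_false]
    omega
  · rcases c with _ | m
    · simp [Len, Nat.mod_one]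
    · have e1 : (2 * (m + 1) + 1) / 2 - 1 = m := by omega
      have e2 : (2 * (m + 1) + 1 + 1) / 2 - 1 = m + 1 := by omega
      have h1 : 2 * (m + 1) + 1 + 1 ≠ 1 := by omega
      have h2 : 2 * (m + 1) + 1 ≠ 1 := by omega
      have h3 : (2 * (m + 1) + 1 + 1) % 2 = 0 := by omega
      have h4 : (2 * (m + 1) + 1) % 2 ≠ 0 := by omega
      simp only [Len, h1, h2, h3, h4, e1, e2, if_true, if_false]
      have b1 : j % 2 ^ m < 2 ^ m := Nat.mod_lt _ (by positivity)
      have b2 : j % 2 ^ (m + 1) < 2 ^ (m + 1) := Nat.mod_lt _ (by positivity)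
      rw [pow_succ] at b2 ⊢
      omega

theorem Len_mono (j : ℕ) {l m : ℕ} (hl : 1 ≤ l) (hlm : l ≤ m) : Len l j ≤ Len m j := by
  induction m, hlm using Nat.le_induction with
  | base => exact le_rfl
  | succ m hm ih => exact ih.trans (Len_step m j (hl.trans hm)).1

theorem one_le_Len (j : ℕ) {l : ℕ} (hl : 1 ≤ l) : 1 ≤ Len l j := by
  simpa [Len] using Len_mono j le_rfl hl

/-- If `x` is positive and `2 * x ≤ Len (A + 1) j`, the least index `ℓ` with `x ≤ Len ℓ j` is at
most `A`, and `Len ℓ j` is less than twice `x`. -/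
theorem exists_least_Len (j A x : ℕ) (hA : 1 ≤ A) (hx : 1 ≤ x) (h : 2 * x ≤ Len (A + 1) j) :
    ∃ l, 1 ≤ l ∧ l ≤ A ∧ x ≤ Len l j ∧ Len l j < 2 * x ∧
      ∀ m, 1 ≤ m → x ≤ Len m j → l ≤ m := by
  have hxA : x ≤ Len A j := by
    have := (Len_step A j hA).2
    omega
  have hex : ∃ l, 1 ≤ l ∧ x ≤ Len l j := ⟨A, hA, hxA⟩
  classical
  obtain ⟨h1, h2⟩ := Nat.find_spec hex
  have hmin : ∀ m, 1 ≤ m → x ≤ Len m j → Nat.find hex ≤ m :=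
    fun m hm hxm => Nat.find_min' hex ⟨hm, hxm⟩
  refine ⟨Nat.find hex, h1, hmin A hA hxA, h2, ?_, hmin⟩
  generalize Nat.find hex = l at h1 h2 hmin ⊢
  obtain ⟨c, rfl⟩ : ∃ c, l = c + 1 := ⟨l - 1, by omega⟩
  rcases c with _ | c
  · simp only [Len, zero_add, if_true]
    omega
  · have hlt : Len (c + 1) j < x := by
      by_contra! hcon
      have := hmin (c + 1) (by omega) hcon
      omega
    have := (Len_step (c + 1) j (by omega)).2
    omega

/-- Let `T` be a string of length `n`, `1 ≤ i < j ≤ n`, `p` the starting position of the minimal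
suffix in `Suf[i,j]`, `A = α(i,j)` the largest `ℓ ≥ 1` with `Len(ℓ,j) < j - i + 1`, and for
`1 ≤ ℓ ≤ A` let `ps ℓ` be the starting position of the minimal suffix in
`Suf[j - Len(ℓ,j) + 1, j]`.  Let `1 ≤ k' < k ≤ A` and let `sk` be the minimal suffix of the
canonical substring `S_j^k`.
(a) If `|sk| > Len(k', j)`, the minimal suffix of `T[i..j]` equals `T[q..j]` for some
`q ∈ {p, ps (k'+1), …, ps A}`.
(b) If `|sk| ≤ Len(k', j)`, the minimal suffix of `T[i..j]` equals `T[q..j]` for some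
`q ∈ {p, ps 1, …, ps k', ps (k+1), …, ps A}`. -/
theorem stmt_13 (T : List α) (i j p A k k' : ℕ) (ps : ℕ → ℕ) (sk : List α)
    (hi : 1 ≤ i) (hij : i < j) (hj : j ≤ T.length)
    (hp1 : i ≤ p) (hp2 : p ≤ j)
    (hpmin : ∀ q, i ≤ q → q ≤ j → ¬ List.Lex (· < ·) (sufFrom T q) (sufFrom T p))
    (hA1 : 1 ≤ A) (hA2 : Len A j < j - i + 1)
    (hA3 : ∀ ℓ, 1 ≤ ℓ → Len ℓ j < j - i + 1 → ℓ ≤ A)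
    (hps : ∀ ℓ, 1 ≤ ℓ → ℓ ≤ A →
      j - Len ℓ j + 1 ≤ ps ℓ ∧ ps ℓ ≤ j ∧
        ∀ q, j - Len ℓ j + 1 ≤ q → q ≤ j →
          ¬ List.Lex (· < ·) (sufFrom T q) (sufFrom T (ps ℓ)))
    (hk' : 1 ≤ k') (hk'k : k' < k) (hkA : k ≤ A)
    (hsk : IsMinSuffix (substr T (j - Len k j + 1) j) sk) :
    (Len k' j < sk.length →
      ∀ s, IsMinSuffix (substr T i j) s →
        ∃ q, (q = p ∨ ∃ ℓ, k' + 1 ≤ ℓ ∧ ℓ ≤ A ∧ q = ps ℓ) ∧ s = substr T q j) ∧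
    (sk.length ≤ Len k' j →
      ∀ s, IsMinSuffix (substr T i j) s →
        ∃ q, (q = p ∨ (∃ ℓ, 1 ≤ ℓ ∧ ℓ ≤ k' ∧ q = ps ℓ) ∨
          ∃ ℓ, k + 1 ≤ ℓ ∧ ℓ ≤ A ∧ q = ps ℓ) ∧ s = substr T q j) := by
  have hcan : ∀ l, 1 ≤ l → l ≤ A → ∀ s, IsMinSuffix (substr T i j) s → s.length ≤ Len l j →
      IsMinSuffix (substr T (j - Len l j + 1) j) s := by
    intro l hl hlA s hs hle
    have hm := Len_mono j hl hlA
    have h1 := one_le_Len j hl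
    refine hs.of_suffix (substr_suffix T hi (by omega) (by omega)) ?_
    rw [length_substr T (by omega) (by omega) hj]
    omega
  have key : ∀ s, IsMinSuffix (substr T i j) s → s = substr T p j ∨
      ∃ l, 1 ≤ l ∧ l ≤ A ∧ s.length ≤ Len l j ∧ (∀ m, 1 ≤ m → s.length ≤ Len m j → l ≤ m) ∧
        s = substr T (ps l) j := by
    intro s hs
    rcases eq_or_two_mul_length_le T hi hj hp1 hp2 hpmin hs with h | h
    · exact Or.inl h
    · have hA4 : j - i + 1 ≤ Len (A + 1) j := by
        by_contra! hcon
        have := hA3 (A + 1) (by omega) hcon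
        omega
      obtain ⟨l, hl1, hlA, hsl, hl2, hmin⟩ := exists_least_Len j A s.length hA1
        (List.length_pos_iff.2 hs.1) (h.trans hA4)
      refine Or.inr ⟨l, hl1, hlA, hsl, hmin, ?_⟩
      have hm := Len_mono j hl1 hlA
      obtain ⟨hq1, hq2, hq3⟩ := hps l hl1 hlA
      rcases eq_or_two_mul_length_le T (by omega) hj hq1 hq2 hq3 (hcan l hl1 hlA s hs hsl)
        with h' | h'
      · exact h'
      · have := one_le_Len j hl1
        omega
  have hk1 : 1 ≤ k := by omega
  have hskeq : ∀ s, IsMinSuffix (substr T i j) s → s.length ≤ Len k j → s = sk :=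
    fun s hs hle => (hcan k hk1 hkA s hs hle).unique hsk
  constructor
  · intro hlong s hs
    rcases key s hs with h | ⟨l, hl1, hlA, hsl, -, h⟩
    · exact ⟨p, Or.inl rfl, h⟩
    · refine ⟨ps l, Or.inr ⟨l, ?_, hlA, rfl⟩, h⟩
      by_contra! hcon
      have hlk' : Len l j ≤ Len k' j := Len_mono j hl1 (by omega)
      have hlk : Len k' j ≤ Len k j := Len_mono j hk' hk'k.le
      have := hskeq s hs (by omega)
      subst this
      omega
  · intro hshort s hs
    rcases key s hs with h | ⟨l, hl1, hlA, hsl, hmin, h⟩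
    · exact ⟨p, Or.inl rfl, h⟩
    · refine ⟨ps l, Or.inr ?_, h⟩
      by_cases hle : s.length ≤ Len k j
      · have := hskeq s hs hle
        subst this
        exact Or.inl ⟨l, hl1, hmin k' hk' hshort, rfl⟩
      · refine Or.inr ⟨l, ?_, hlA, rfl⟩
        by_contra! hcon
        have : Len l j ≤ Len k j := Len_mono j hl1 (by omega)
        omega
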